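/- Let X be a finite dimensional Hilbert space over 𝕂 of dimension d ≥ 2 and 𝒮 = (S_n)_{n∈ℤ} a sequence of invertible linear operators on X with sup_{n∈ℤ} max{‖S_n‖, ‖S_n⁻¹‖} < ∞. Suppose 𝓔 = {v_1, …, v_d} ⊆ X∖{0} is such that each 𝓔_n = {e_n(v_i) : 1 ≤ i ≤ d} is a basis of X, and there exists δ < 1 such that for every n ∈ ℤ, every 1 ≤ i ≤ d, and every nonzero u in the subspace F_{n,i} spanned by {e_n(v_j) : j ≠ i}, one has |⟨e_n(v_i), u⟩| ≤ δ‖u‖ (i.e., the angle between e_n(v_i) and F_{n,i} is uniformly bounded away from 0). Then, for each 1 ≤ p < ∞, the shift operator σ_𝒮 : ℓ_p(X) → ℓ_p(X) is conjugate (by a bounded invertible linear operator) to the finite product B_{ω(v_1)} × ⋯ × B_{ω(v_d)} : (ℓ_p(𝕂))^d → (ℓ_p(𝕂))^d with the sum norm. -/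

import Mathlib

/-!
The unit vectors along the orbit of `x` satisfy `S (n + 1) (e_{n+1}(x)) = ω_{n+1}(x) • e_n(x)`.
Hence, writing the `n`-th entry of a sequence in the basis `e_n(v 1), …, e_n(v d)`, each `S (n + 1)`
becomes the diagonal matrix with entries `ω_{n+1}(v i)`, and taking coordinates intertwines the
shift operator with the product of the weighted backward shifts.

Bounded invertibility of this change of coordinates needs bounds uniform in `n`. Reassembling a
vector from its coordinates is bounded because the basis vectors are unit vectors. For the coordinate
functionals, split `x = a • e_n(v i) + u` with `u` in the span of the other basis vectors; the angle
hypothesis gives `‖x‖² ≥ ‖a‖² + ‖u‖² - 2 δ ‖a‖ ‖u‖ ≥ (1 - δ) ‖a‖²` (for `δ ≥ 0`), so these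
functionals have norm at most `(1 - δ)^(-1/2)`. Uniformly bounded families of operators act
entrywise on `ℓ_p`, which turns both maps into bounded operators inverse to each other.
-/

open scoped ENNReal

namespace ShiftOperators

variable {𝕂 : Type*} [RCLike 𝕂] {X : Type*} [NormedAddCommGroup X] [NormedSpace 𝕂 X]

/-- `backComp S n x = (S_{[1,n]})⁻¹ x = Sₙ⁻¹ (⋯ (S₁⁻¹ x))`, with the convention
`S_{[1,0]} = Id` (empty composition). -/
def backComp (S : ℤ → X ≃L[𝕂] X) : ℕ → X → X
  | 0, x => x
  | n + 1, x => (S ((n : ℤ) + 1)).symm (backComp S n x)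

/-- `fwdComp S n x = S_{[-n+1,0]} x = S_{-n+1} (⋯ (S₀ x))`, with the convention
`fwdComp S 0 x = x` (empty composition). -/
def fwdComp (S : ℤ → X ≃L[𝕂] X) : ℕ → X → X
  | 0, x => x
  | n + 1, x => S (-(n : ℤ)) (fwdComp S n x)

/-- The unit vectors `e_n(x)` associated to a sequence of operators `S` and a vector `x`:
`e_n(x) = (S_{[1,n]})⁻¹ x / ‖(S_{[1,n]})⁻¹ x‖` for `n ≥ 0` and
`e_n(x) = S_{[n+1,0]} x / ‖S_{[n+1,0]} x‖` for `n < 0`. -/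
noncomputable def eVec (S : ℤ → X ≃L[𝕂] X) (x : X) (n : ℤ) : X :=
  if 0 ≤ n then ((‖backComp S n.toNat x‖ : ℝ) : 𝕂)⁻¹ • backComp S n.toNat x
  else ((‖fwdComp S (-n).toNat x‖ : ℝ) : 𝕂)⁻¹ • fwdComp S (-n).toNat x

/-- The weights `ω_n(x)`: `ω_n(x) = ‖(S_{[1,n-1]})⁻¹ x‖ / ‖(S_{[1,n]})⁻¹ x‖` for `n > 0`
and `ω_n(x) = ‖S_{[n,0]} x‖ / ‖S_{[n+1,0]} x‖` for `n ≤ 0`. -/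
noncomputable def wt (S : ℤ → X ≃L[𝕂] X) (x : X) (n : ℤ) : ℝ :=
  if 0 < n then ‖backComp S (n - 1).toNat x‖ / ‖backComp S n.toNat x‖
  else ‖fwdComp S (1 - n).toNat x‖ / ‖fwdComp S (-n).toNat x‖

/-- `sup_{n ∈ ℤ} max {‖Sₙ‖, ‖Sₙ⁻¹‖} < ∞`. -/
def UnifBounded (S : ℤ → X ≃L[𝕂] X) : Prop :=
  ∃ C : ℝ, ∀ n : ℤ, ‖(S n : X →L[𝕂] X)‖ ≤ C ∧ ‖((S n).symm : X →L[𝕂] X)‖ ≤ C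

/-- A map is topologically transitive. -/
def TopolTransitive {Y : Type*} [TopologicalSpace Y] (T : Y → Y) : Prop :=
  ∀ U V : Set Y, IsOpen U → IsOpen V → U.Nonempty → V.Nonempty →
    ∃ n : ℕ, (T^[n] '' U ∩ V).Nonempty

/-- A map is (topologically) mixing. -/
def TopolMixing {Y : Type*} [TopologicalSpace Y] (T : Y → Y) : Prop :=
  ∀ U V : Set Y, IsOpen U → IsOpen V → U.Nonempty → V.Nonempty →
    ∃ N : ℕ, ∀ n ≥ N, (T^[n] '' U ∩ V).Nonempty

/-- A map has the (linear) shadowing property with constant `K`: every bounded sequence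
`(z_n)` admits a bounded sequence `(x_n)` with `x_{n+1} - T x_n = z_n` and
`sup ‖x_n‖ ≤ K sup ‖z_n‖`. -/
def ShadowingWith {Y : Type*} [NormedAddCommGroup Y] (T : Y → Y) (K : ℝ) : Prop :=
  ∀ z : ℤ → Y, BddAbove (Set.range fun n => ‖z n‖) →
    ∃ x : ℤ → Y, BddAbove (Set.range fun n => ‖x n‖) ∧
      (∀ n : ℤ, x (n + 1) - T (x n) = z n) ∧
      (⨆ n : ℤ, ‖x n‖) ≤ K * ⨆ n : ℤ, ‖z n‖

/-- A map has the (linear) shadowing property. -/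
def Shadowing {Y : Type*} [NormedAddCommGroup Y] (T : Y → Y) : Prop :=
  ∃ K > 0, ShadowingWith T K

/-- A bounded invertible operator is generalized hyperbolic: `Y = M ⊕ N` for closed
subspaces with `T M ⊆ M`, `T⁻¹ N ⊆ N`, `T` uniformly contracting on `M` and `T⁻¹`
uniformly contracting on `N`. -/
def GeneralizedHyperbolic {Y : Type*} [NormedAddCommGroup Y] [NormedSpace 𝕂 Y]
    (T : Y ≃L[𝕂] Y) : Prop :=
  ∃ M N : Submodule 𝕂 Y, IsClosed (M : Set Y) ∧ IsClosed (N : Set Y) ∧ IsCompl M N ∧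
    (∀ u ∈ M, T u ∈ M) ∧ (∀ v ∈ N, T.symm v ∈ N) ∧
    ∃ C > 0, ∃ lam : ℝ, 0 < lam ∧ lam < 1 ∧
      (∀ u ∈ M, ∀ n : ℕ, ‖(⇑T)^[n] u‖ ≤ C * lam ^ n * ‖u‖) ∧
      (∀ v ∈ N, ∀ n : ℕ, ‖(⇑T.symm)^[n] v‖ ≤ C * lam ^ n * ‖v‖)

end ShiftOperators

namespace ShiftOperators

section Weights

variable {𝕂 : Type*} [RCLike 𝕂] {X : Type*} [NormedAddCommGroup X] [NormedSpace 𝕂 X]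

lemma backComp_ne_zero (S : ℤ → X ≃L[𝕂] X) {x : X} (hx : x ≠ 0) (n : ℕ) :
    backComp S n x ≠ 0 := by
  induction n with
  | zero => exact hx
  | succ n ih => simpa [backComp] using ih

lemma fwdComp_ne_zero (S : ℤ → X ≃L[𝕂] X) {x : X} (hx : x ≠ 0) (n : ℕ) :
    fwdComp S n x ≠ 0 := by
  induction n with
  | zero => exact hx
  | succ n ih => simpa [fwdComp] using ih

lemma norm_eVec (S : ℤ → X ≃L[𝕂] X) {x : X} (hx : x ≠ 0) (n : ℤ) : ‖eVec S x n‖ = 1 := by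
  unfold eVec
  split_ifs
  · have := norm_ne_zero_iff.2 (backComp_ne_zero S hx n.toNat)
    rw [norm_smul, norm_inv, RCLike.norm_ofReal, abs_norm, inv_mul_cancel₀ this]
  · have := norm_ne_zero_iff.2 (fwdComp_ne_zero S hx (-n).toNat)
    rw [norm_smul, norm_inv, RCLike.norm_ofReal, abs_norm, inv_mul_cancel₀ this]

lemma eVec_natCast (S : ℤ → X ≃L[𝕂] X) (x : X) (n : ℕ) :
    eVec S x n = ((‖backComp S n x‖ : ℝ) : 𝕂)⁻¹ • backComp S n x := by
  simp [eVec]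

/-- The two formulas defining `eVec` agree at `n = 0`, so the second one also holds there. -/
lemma eVec_neg_natCast (S : ℤ → X ≃L[𝕂] X) (x : X) (n : ℕ) :
    eVec S x (-n) = ((‖fwdComp S n x‖ : ℝ) : 𝕂)⁻¹ • fwdComp S n x := by
  rcases n with _ | n
  · simp [eVec, backComp, fwdComp]
  · have h1 : ¬ (0 : ℤ) ≤ -((n + 1 : ℕ) : ℤ) := by omega
    have h2 : (-(-((n + 1 : ℕ) : ℤ))).toNat = n + 1 := by omega
    rw [eVec, if_neg h1, h2]

/-- Each `S (n + 1)` maps the line through `eVec S x (n + 1)` to the line through `eVec S x n`,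
acting as the weight `wt S x (n + 1)`. -/
lemma map_eVec (S : ℤ → X ≃L[𝕂] X) {x : X} (hx : x ≠ 0) (n : ℤ) :
    S (n + 1) (eVec S x (n + 1)) = ((wt S x (n + 1) : ℝ) : 𝕂) • eVec S x n := by
  obtain ⟨k, rfl⟩ | ⟨k, hk⟩ : (∃ k : ℕ, n = k) ∨ ∃ k : ℕ, n + 1 = -k := by
    rcases le_or_gt 0 n with h | h
    · exact Or.inl ⟨n.toNat, by omega⟩
    · exact Or.inr ⟨(-(n + 1)).toNat, by omega⟩
  · have hw : wt S x (k + 1) = ‖backComp S k x‖ / ‖backComp S (k + 1) x‖ := by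
      have h1 : ((k : ℤ) + 1 - 1).toNat = k := by omega
      have h2 : ((k : ℤ) + 1).toNat = k + 1 := by omega
      rw [wt, if_pos (by omega), h1, h2]
    have he := eVec_natCast S x (k + 1)
    push_cast at he
    have hS : S ((k : ℤ) + 1) (backComp S (k + 1) x) = backComp S k x := by simp [backComp]
    have h0 : ((‖backComp S k x‖ : ℝ) : 𝕂) ≠ 0 := by simpa using backComp_ne_zero S hx k
    rw [hw, he, eVec_natCast, map_smul, hS, smul_smul]
    push_cast
    congr 1
    field_simp
  · have hn : n = -((k + 1 : ℕ) : ℤ) := by push_cast; omega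
    have hw : wt S x (n + 1) = ‖fwdComp S (k + 1) x‖ / ‖fwdComp S k x‖ := by
      have h1 : (1 - (-(k : ℤ))).toNat = k + 1 := by omega
      have h2 : (-(-(k : ℤ))).toNat = k := by omega
      rw [hk, wt, if_neg (by omega), h1, h2]
    have hS : S (-(k : ℤ)) (fwdComp S k x) = fwdComp S (k + 1) x := rfl
    have h0 : ((‖fwdComp S (k + 1) x‖ : ℝ) : 𝕂) ≠ 0 := by
      simpa using fwdComp_ne_zero S hx (k + 1)
    rw [hw, hk, hn, eVec_neg_natCast, eVec_neg_natCast, map_smul, hS, smul_smul]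
    push_cast
    congr 1
    field_simp

end Weights

section Angle

variable {𝕂 : Type*} [RCLike 𝕂] {X : Type*} [NormedAddCommGroup X] [InnerProductSpace 𝕂 X]

/-- If a unit vector `e` makes an angle of cosine at most `δ` with `u`, then the component along
`e` of `a • e + u` is controlled by the norm of the sum. -/
lemma norm_coeff_sq_le {e u : X} (he : ‖e‖ = 1) {δ : ℝ} (hδ0 : 0 ≤ δ)
    (h : ‖@inner 𝕂 X _ e u‖ ≤ δ * ‖u‖) (hδ : δ < 1) (a : 𝕂) :
    (1 - δ) * ‖a‖ ^ 2 ≤ ‖a • e + u‖ ^ 2 := by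
  have h1 : ‖a • e + u‖ ^ 2 = ‖a‖ ^ 2 + 2 * RCLike.re (@inner 𝕂 X _ (a • e) u) + ‖u‖ ^ 2 := by
    rw [norm_add_sq (𝕜 := 𝕂), norm_smul, he, mul_one]
  have h2 : |RCLike.re (@inner 𝕂 X _ (a • e) u)| ≤ ‖a‖ * (δ * ‖u‖) := by
    refine (RCLike.abs_re_le_norm _).trans ?_
    rw [inner_smul_left, norm_mul, RCLike.norm_conj]
    gcongr
  have h3 := (abs_le.1 h2).1
  nlinarith [mul_nonneg hδ0 (sq_nonneg (‖a‖ - ‖u‖)), mul_nonneg (sub_nonneg.2 hδ.le) (sq_nonneg ‖u‖)]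

/-- The coordinate functionals of a basis of unit vectors, each of which makes an angle of cosine
at most `δ < 1` with the span of the others, are bounded by a constant depending only on `δ`. -/
lemma norm_repr_le {ι : Type*} [Fintype ι] (b : Module.Basis ι 𝕂 X)
    (hb : ∀ i, ‖b i‖ = 1) {δ : ℝ} (hδ : δ < 1)
    (hangle : ∀ (i : ι) (u : X), u ∈ Submodule.span 𝕂 (b '' {j | j ≠ i}) → u ≠ 0 →
      ‖@inner 𝕂 X _ (b i) u‖ ≤ δ * ‖u‖) (i : ι) (x : X) :
    ‖b.repr x i‖ ≤ √(1 - max δ 0)⁻¹ * ‖x‖ := by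
  classical
  set u : X := ∑ j ∈ Finset.univ.erase i, b.repr x j • b j with hu
  have hx : b.repr x i • b i + u = x := by
    rw [hu, Finset.add_sum_erase _ (fun j => b.repr x j • b j) (Finset.mem_univ i), b.sum_repr]
  have hmem : u ∈ Submodule.span 𝕂 (b '' {j | j ≠ i}) :=
    Submodule.sum_mem _ fun j hj => Submodule.smul_mem _ _
      (Submodule.subset_span ⟨j, Finset.ne_of_mem_erase hj, rfl⟩)
  have hin : ‖@inner 𝕂 X _ (b i) u‖ ≤ max δ 0 * ‖u‖ := by
    by_cases h0 : u = 0
    · simp [h0]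
    · exact (hangle i u hmem h0).trans (by gcongr; exact le_max_left _ _)
  have hm : max δ 0 < 1 := max_lt hδ one_pos
  have key := norm_coeff_sq_le (hb i) (le_max_right δ 0) hin hm (b.repr x i)
  rw [hx] at key
  have hpos : 0 < 1 - max δ 0 := sub_pos.2 hm
  refine le_of_sq_le_sq ?_ (by positivity)
  rw [mul_pow, Real.sq_sqrt (by positivity), inv_mul_eq_div, le_div_iff₀ hpos]
  linarith

end Angle

end ShiftOperators

open ShiftOperators

/-- If `X` is a `d`-dimensional Hilbert space, `d ≥ 2`, and the sequence `𝒮` has a basis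
`𝓔 = {v 1, …, v d}` such that the angles between `eₙ(v i)` and the span `F_{n,i}` of the
remaining vectors of `𝓔ₙ` are uniformly bounded away from `0` (i.e. `|⟨eₙ(v i), u⟩| ≤ δ ‖u‖`
for all nonzero `u ∈ F_{n,i}`, for some fixed `δ < 1`), then the shift operator `σ_𝒮` on
`ℓ_p(X)` is conjugate to the product of the weighted backward shifts `B_{ω(v i)}`. -/
theorem shift_operator_conjugate_of_uniform_angle_basis
    {𝕂 : Type*} [RCLike 𝕂] {X : Type*} [NormedAddCommGroup X] [InnerProductSpace 𝕂 X]
    [FiniteDimensional 𝕂 X] {d : ℕ} (hd : 2 ≤ d) (hdim : Module.finrank 𝕂 X = d)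
    (S : ℤ → X ≃L[𝕂] X) (hS : UnifBounded S)
    (v : Fin d → X) (hv : ∀ i, v i ≠ 0)
    (hEli : ∀ n : ℤ, LinearIndependent 𝕂 (fun i => eVec S (v i) n))
    (hEsp : ∀ n : ℤ, Submodule.span 𝕂 (Set.range fun i => eVec S (v i) n) = ⊤)
    (δ : ℝ) (hδ : δ < 1)
    (hangle : ∀ (n : ℤ) (i : Fin d) (u : X),
      u ∈ Submodule.span 𝕂 ((fun j => eVec S (v j) n) '' {j | j ≠ i}) → u ≠ 0 →
      ‖@inner 𝕂 X _ (eVec S (v i) n) u‖ ≤ δ * ‖u‖)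
    (p : ℝ≥0∞) [Fact (1 ≤ p)] (hp : p ≠ ∞)
    (σ : lp (fun _ : ℤ => X) p ≃L[𝕂] lp (fun _ : ℤ => X) p)
    (hσ : ∀ (u : lp (fun _ : ℤ => X) p) (n : ℤ), σ u n = S (n + 1) (u (n + 1)))
    (P : PiLp 1 (fun _ : Fin d => lp (fun _ : ℤ => 𝕂) p) ≃L[𝕂]
         PiLp 1 (fun _ : Fin d => lp (fun _ : ℤ => 𝕂) p))
    (hP : ∀ (w : PiLp 1 (fun _ : Fin d => lp (fun _ : ℤ => 𝕂) p)) (i : Fin d) (n : ℤ),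
      P w i n = ((wt S (v i) (n + 1) : ℝ) : 𝕂) * w i (n + 1)) :
    ∃ H : lp (fun _ : ℤ => X) p ≃L[𝕂] PiLp 1 (fun _ : Fin d => lp (fun _ : ℤ => 𝕂) p),
      ∀ u : lp (fun _ : ℤ => X) p, H (σ u) = P (H u) := by
  have : CompleteSpace X := FiniteDimensional.complete 𝕂 X
  let b : ℤ → Module.Basis (Fin d) 𝕂 X := fun n => Module.Basis.mk (hEli n) (hEsp n).ge
  have hb : ∀ n i, b n i = eVec S (v i) n := fun n i => by simp [b]
  have hbn : ∀ n, ⇑(b n) = fun i => eVec S (v i) n := fun n => funext (hb n)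
  -- in the bases `b (n + 1)` and `b n`, the operator `S (n + 1)` is diagonal
  have hdiag : ∀ (n : ℤ) (i : Fin d) (x : X), (b n).repr (S (n + 1) x) i
      = ((wt S (v i) (n + 1) : ℝ) : 𝕂) * (b (n + 1)).repr x i := by
    intro n i x
    have hx : S (n + 1) x = ∑ j, (((wt S (v j) (n + 1) : ℝ) : 𝕂) * (b (n + 1)).repr x j) • b n j := by
      conv_lhs => rw [← (b (n + 1)).sum_repr x]
      rw [map_sum]
      refine Finset.sum_congr rfl fun j _ => ?_
      rw [map_smul, hb, hb, map_eVec S (hv j), smul_smul, mul_comm]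
    rw [hx, (b n).repr_sum_self]
  -- entrywise coordinates and reassembly, with bounds uniform in the index `n`
  let c : Fin d → ℤ → X →L[𝕂] 𝕂 := fun i n => LinearMap.toContinuousLinearMap ((b n).coord i)
  have hc : ∀ i n, ‖c i n‖ ≤ √(1 - max δ 0)⁻¹ := fun i n =>
    ContinuousLinearMap.opNorm_le_bound _ (Real.sqrt_nonneg _) fun x =>
      norm_repr_le (b n) (fun j => by rw [hb, norm_eVec S (hv j)]) hδ
        (fun j u hu h0 => by rw [hbn] at hu ⊢; exact hangle n j u hu h0) i x
  let r : Fin d → ℤ → 𝕂 →L[𝕂] X := fun i n => ContinuousLinearMap.toSpanSingleton 𝕂 (b n i)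
  have hr : ∀ i n, ‖r i n‖ ≤ 1 := fun i n => by
    rw [ContinuousLinearMap.norm_toSpanSingleton, hb, norm_eVec S (hv i)]
  let F : lp (fun _ : ℤ => X) p →L[𝕂] (Fin d → lp (fun _ : ℤ => 𝕂) p) :=
    ContinuousLinearMap.pi fun i => lp.mapCLM p (c i) (Real.sqrt_nonneg _) (hc i)
  let G : (Fin d → lp (fun _ : ℤ => 𝕂) p) →L[𝕂] lp (fun _ : ℤ => X) p :=
    ∑ i, (lp.mapCLM p (r i) zero_le_one (hr i)).comp (ContinuousLinearMap.proj i)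
  have hF : ∀ u i n, F u i n = (b n).repr (u n) i := fun u i n => rfl
  have hG : ∀ w n, G w n = ∑ i, w i n • b n i := by
    intro w n
    simp only [G, sum_apply, lp.coeFn_sum, Finset.sum_apply]
    rfl
  have hGF : Function.LeftInverse G F := by
    intro u
    ext n
    rw [hG]
    simp only [hF]
    exact (b n).sum_repr _
  have hFG : Function.RightInverse G F := by
    intro w
    funext i
    ext n
    rw [hF, hG, (b n).repr_sum_self]
  refine ⟨(ContinuousLinearEquiv.equivOfInverse F G hGF hFG).trans
    (PiLp.continuousLinearEquiv 1 𝕂 (fun _ : Fin d => lp (fun _ : ℤ => 𝕂) p)).symm, fun u => ?_⟩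
  ext i n
  rw [hP]
  change F (σ u) i n = _ * F u i (n + 1)
  rw [hF, hF, hσ, hdiag]
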